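/- Let 𝒲 = ℝ^d and suppose that for every i the map w ↦ ℓ(w, s i) is twice continuously differentiable with operator norm of its Hessian bounded by B_H uniformly in w and i. For a permutation z define the Hessian of the transductive generalization gap H(w,z) := (1/u)·Σ_{i=m}^{m+u−1} Hess_w ℓ(w, s(z i)) − (1/m)·Σ_{i=0}^{m−1} Hess_w ℓ(w, s(z i)) (a symmetric d×d matrix). Let W be an ℝ^d-valued random variable jointly distributed with the uniform random permutation Z, with P_{W,Z} ≪ P_W ⊗ P_Z. Then | E_{W,Z}[ trace( H(W,Z) ) ] | ≤ sqrt( 32 · d² · B_H² · C_{m,u} · ( I(W;Z) + log d ) · (m+u) / (m·u) ). -/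

import Mathlib

/-!
The trace of the Hessian gap is the difference between the test mean and the training mean of the
numbers `G w i = trace (Hess ℓ (w, s i))`, each of absolute value at most `K = d * BH`.

Let `p = min m u`. Pairing the smaller block of positions with each cyclic shift of the larger one
writes the gap as an average of terms `(1/p) ∑ (G w (z (a i)) - G w (z (b i)))` over `p` disjoint
pairs of positions (`cyclic_average`). Under a uniform permutation, the transpositions of `a i` and
`b i` symmetrize such a term, so for fixed `w` it is sub-Gaussian with variance proxy `4 K² / p`
(`sum_perm_exp_le`, `integral_exp_le`). The Donsker–Varadhan inequality
(`integral_le_integral_llr_add_log`), with the optimal tilt, bounds its expectation under the joint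
law by `√(8 K² I(W;Z) / p)` (`pair_bound`), and the averages inherit this bound (`gap_bound`). The
claim follows since `1 / p ≤ (m + u) / (m u)`, `1 ≤ C_{m,u}` and `0 ≤ log d`.

The definition of the mutual information by a Bochner integral is meaningful here because the joint
law has density at most `(m + u)!` (`map_prodMk_le_card_mul_prod`, `integrable_llr_of_le`).
-/

open MeasureTheory ProbabilityTheory Real

noncomputable section

/-- The constant `C_{m,u} = 2(m+u)·max(m,u)/((m+u−1/2)·(2·max(m,u)−1))`. -/
def Cmu (m u : ℕ) : ℝ :=
  2 * ((m : ℝ) + u) * max (m : ℝ) u / ((((m : ℝ) + u) - 1/2) * (2 * max (m : ℝ) u - 1))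

/-- Transductive training error: average loss over the first `m` indices of the
sampling sequence `z`. -/
def Rtrain {S W : Type*} (m u : ℕ) (s : Fin (m + u) → S) (ℓ : W → S → ℝ)
    (w : W) (z : Fin (m + u) → Fin (m + u)) : ℝ :=
  (∑ i : Fin (m + u), if (i : ℕ) < m then ℓ w (s (z i)) else 0) / m

/-- Transductive test error: average loss over the last `u` indices of the
sampling sequence `z`. -/
def Rtest {S W : Type*} (m u : ℕ) (s : Fin (m + u) → S) (ℓ : W → S → ℝ)
    (w : W) (z : Fin (m + u) → Fin (m + u)) : ℝ :=
  (∑ i : Fin (m + u), if m ≤ (i : ℕ) then ℓ w (s (z i)) else 0) / u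

instance (n : ℕ) : MeasurableSpace (Equiv.Perm (Fin n)) := ⊤

/-- The uniform distribution on the symmetric group of `Fin n` (sampling without
replacement). -/
def uniformPerm (n : ℕ) : Measure (Equiv.Perm (Fin n)) :=
  letI : Nonempty (Equiv.Perm (Fin n)) := ⟨1⟩
  (PMF.uniformOfFintype (Equiv.Perm (Fin n))).toMeasure

/-- Kullback–Leibler divergence `D_KL(μ ‖ ν) = ∫ log(dμ/dν) dμ`. -/
def klDivR {α : Type*} [MeasurableSpace α] (μ ν : Measure α) : ℝ :=
  ∫ x, llr μ ν x ∂μ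

/-- Mutual information `I(X;Y) = D_KL(P_{X,Y} ‖ P_X ⊗ P_Y)`. -/
def mutInfo {Ω α β : Type*} [MeasurableSpace Ω] [MeasurableSpace α] [MeasurableSpace β]
    (μ : Measure Ω) (X : Ω → α) (Y : Ω → β) : ℝ :=
  klDivR (Measure.map (fun ω => (X ω, Y ω)) μ) ((Measure.map X μ).prod (Measure.map Y μ))

/-- The Hessian of `g` at `w`, as a bilinear form, applied to `(v₁, v₂)`. -/
def hessApply (d : ℕ) (g : EuclideanSpace ℝ (Fin d) → ℝ)
    (w v₁ v₂ : EuclideanSpace ℝ (Fin d)) : ℝ :=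
  iteratedFDeriv ℝ 2 g w ![v₁, v₂]

/-- The trace of the Hessian of the transductive generalization gap,
`trace( (1/u)·Σ_{test} Hess ℓ(·, s(z i)) − (1/m)·Σ_{train} Hess ℓ(·, s(z i)) )`. -/
def traceHessGap {S : Type*} (m u d : ℕ) (s : Fin (m + u) → S)
    (ℓ : EuclideanSpace ℝ (Fin d) → S → ℝ)
    (w : EuclideanSpace ℝ (Fin d)) (z : Fin (m + u) → Fin (m + u)) : ℝ :=
  ∑ j : Fin d,
    ((∑ i : Fin (m + u), if m ≤ (i : ℕ) then
        hessApply d (fun w' => ℓ w' (s (z i))) w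
          (EuclideanSpace.single j 1) (EuclideanSpace.single j 1) else 0) / u
      - (∑ i : Fin (m + u), if (i : ℕ) < m then
          hessApply d (fun w' => ℓ w' (s (z i))) w
            (EuclideanSpace.single j 1) (EuclideanSpace.single j 1) else 0) / m)

open Finset in
/-- Symmetrization over disjoint pairs: right multiplication by the transposition of `a i` and `b i`
preserves the sum over all permutations, flips the sign of the `i`-th difference and fixes the
others. Each factor `exp` may therefore be replaced by a `cosh`, which is at most a Gaussian
exponential. -/
theorem sum_perm_exp_le {n p : ℕ} (c K : ℝ) (x : Fin n → ℝ) (hx : ∀ i, |x i| ≤ K)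
    (a b : Fin p → Fin n) (ha : Function.Injective a) (hb : Function.Injective b)
    (hab : ∀ i j, a i ≠ b j) (T : Finset (Fin p)) :
    ∑ z : Equiv.Perm (Fin n), ∏ i ∈ T, exp (c * (x (z (a i)) - x (z (b i))))
      ≤ exp (2 * c ^ 2 * K ^ 2) ^ #T * Fintype.card (Equiv.Perm (Fin n)) := by
  induction T using Finset.induction_on with
  | empty => simp
  | insert i T hi ih =>
    set D : Fin p → Equiv.Perm (Fin n) → ℝ := fun j z => c * (x (z (a j)) - x (z (b j))) with hD
    -- The factors over `T` do not see the swap of `a i` and `b i`, which flips the sign of `D i`.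
    have hinv : ∀ z, ∀ j ∈ T, D j (z * Equiv.swap (a i) (b i)) = D j z := by
      intro z j hj
      have hji : j ≠ i := fun h => hi (h ▸ hj)
      simp only [hD, Equiv.Perm.mul_apply]
      rw [Equiv.swap_apply_of_ne_of_ne (ha.ne hji) (hab j i),
        Equiv.swap_apply_of_ne_of_ne (hab i j).symm (hb.ne hji)]
    have hflip : ∀ z, D i (z * Equiv.swap (a i) (b i)) = - D i z := by
      intro z
      simp only [hD, Equiv.Perm.mul_apply, Equiv.swap_apply_left, Equiv.swap_apply_right]
      ring
    have hswap : ∑ z, exp (D i z) * ∏ j ∈ T, exp (D j z)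
        = ∑ z, exp (-D i z) * ∏ j ∈ T, exp (D j z) := by
      rw [← Equiv.sum_comp (Equiv.mulRight (Equiv.swap (a i) (b i)))]
      refine Finset.sum_congr rfl fun z _ => ?_
      simp only [Equiv.coe_mulRight, hflip]
      congr 1
      exact Finset.prod_congr rfl fun j hj => by rw [hinv z j hj]
    have hcosh : ∑ z, exp (D i z) * ∏ j ∈ T, exp (D j z)
        = ∑ z, cosh (D i z) * ∏ j ∈ T, exp (D j z) := by
      have : ∑ z, cosh (D i z) * ∏ j ∈ T, exp (D j z)
          = (∑ z, exp (D i z) * ∏ j ∈ T, exp (D j z)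
            + ∑ z, exp (-D i z) * ∏ j ∈ T, exp (D j z)) / 2 := by
        rw [← Finset.sum_add_distrib, Finset.sum_div]
        refine Finset.sum_congr rfl fun z _ => ?_
        rw [Real.cosh_eq]; ring
      rw [this, ← hswap]; ring
    have hbound : ∀ z, cosh (D i z) ≤ exp (2 * c ^ 2 * K ^ 2) := by
      intro z
      refine (Real.cosh_le_exp_half_sq _).trans (exp_le_exp.2 ?_)
      have h1 : |x (z (a i)) - x (z (b i))| ≤ 2 * K := by
        have := abs_sub (x (z (a i))) (x (z (b i)))
        linarith [hx (z (a i)), hx (z (b i))]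
      have h2 : (x (z (a i)) - x (z (b i))) ^ 2 ≤ (2 * K) ^ 2 := sq_le_sq' (by
        linarith [(abs_le.1 h1).1]) (abs_le.1 h1).2
      simp only [hD]
      nlinarith [mul_le_mul_of_nonneg_left h2 (sq_nonneg c)]
    calc ∑ z, ∏ j ∈ insert i T, exp (D j z)
        = ∑ z, exp (D i z) * ∏ j ∈ T, exp (D j z) := by simp_rw [Finset.prod_insert hi]
      _ = ∑ z, cosh (D i z) * ∏ j ∈ T, exp (D j z) := hcosh
      _ ≤ ∑ z, exp (2 * c ^ 2 * K ^ 2) * ∏ j ∈ T, exp (D j z) :=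
          Finset.sum_le_sum fun z _ => mul_le_mul_of_nonneg_right (hbound z)
            (Finset.prod_nonneg fun _ _ => (exp_pos _).le)
      _ = exp (2 * c ^ 2 * K ^ 2) * ∑ z, ∏ j ∈ T, exp (D j z) := by rw [Finset.mul_sum]
      _ ≤ exp (2 * c ^ 2 * K ^ 2)
            * (exp (2 * c ^ 2 * K ^ 2) ^ #T * Fintype.card (Equiv.Perm (Fin n))) :=
          mul_le_mul_of_nonneg_left ih (exp_pos _).le
      _ = _ := by rw [Finset.card_insert_of_notMem hi]; ring

instance isProbabilityMeasure_uniformPerm (n : ℕ) : IsProbabilityMeasure (uniformPerm n) := by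
  unfold uniformPerm; infer_instance

theorem uniformPerm_singleton (n : ℕ) (z : Equiv.Perm (Fin n)) :
    uniformPerm n {z} = (Fintype.card (Equiv.Perm (Fin n)) : ENNReal)⁻¹ := by
  let _ : Nonempty (Equiv.Perm (Fin n)) := ⟨1⟩
  unfold uniformPerm
  rw [PMF.toMeasure_apply_singleton _ _ (MeasurableSet.of_discrete)]
  simp

theorem integral_uniformPerm (n : ℕ) (f : Equiv.Perm (Fin n) → ℝ) :
    ∫ z, f z ∂(uniformPerm n) = (∑ z, f z) / Fintype.card (Equiv.Perm (Fin n)) := by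
  rw [integral_fintype .of_finite, Finset.sum_div]
  refine Finset.sum_congr rfl fun z _ => ?_
  rw [measureReal_def, uniformPerm_singleton]
  simp [div_eq_inv_mul]

/-- The average of `p` differences over disjoint pairs of positions of a uniform permutation is
sub-Gaussian with variance proxy `4 K² / p`. -/
theorem integral_exp_le {n p : ℕ} (hp : 0 < p) (t K : ℝ) (x : Fin n → ℝ) (hx : ∀ i, |x i| ≤ K)
    (a b : Fin p → Fin n) (ha : Function.Injective a) (hb : Function.Injective b)
    (hab : ∀ i j, a i ≠ b j) :
    ∫ z, exp (t * ((∑ i, (x (z (a i)) - x (z (b i)))) / p)) ∂(uniformPerm n)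
      ≤ exp (2 * t ^ 2 * K ^ 2 / p) := by
  have hp' : (0 : ℝ) < p := by exact_mod_cast hp
  rw [integral_uniformPerm, div_le_iff₀ (by exact_mod_cast Fintype.card_pos)]
  have h := sum_perm_exp_le (t / p) K x hx a b ha hb hab Finset.univ
  rw [← exp_nat_mul, Finset.card_univ, Fintype.card_fin] at h
  have e1 : (p : ℝ) * (2 * (t / p) ^ 2 * K ^ 2) = 2 * t ^ 2 * K ^ 2 / p := by field_simp
  rw [e1] at h
  refine (le_of_eq (Finset.sum_congr rfl fun z _ => ?_)).trans h
  rw [← exp_sum, ← Finset.mul_sum]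
  congr 1
  ring

/-- Donsker–Varadhan inequality for bounded functions; it is Gibbs' inequality for `P` relative to
the exponential tilt of `Q` by `f`. -/
theorem integral_le_integral_llr_add_log {α : Type*} [MeasurableSpace α] (P Q : Measure α) [IsProbabilityMeasure P]
    [IsProbabilityMeasure Q] (hPQ : P ≪ Q) (hint : Integrable (llr P Q) P) (f : α → ℝ)
    (hf : Measurable f) (C : ℝ) (hC : ∀ x, |f x| ≤ C) :
    ∫ x, f x ∂P ≤ ∫ x, llr P Q x ∂P + log (∫ x, exp (f x) ∂Q) := by
  have hfP : Integrable f P := .of_bound hf.aestronglyMeasurable C (.of_forall hC)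
  have hfQ : Integrable (fun x => exp (f x)) Q :=
    .of_bound hf.exp.aestronglyMeasurable (exp C) (.of_forall fun x => by
      rw [norm_of_nonneg (exp_pos _).le]
      exact exp_le_exp.2 ((le_abs_self _).trans (hC x)))
  have := isProbabilityMeasure_tilted hfQ
  have h := InformationTheory.integral_llr_add_sub_measure_univ_nonneg
    (hPQ.trans (absolutelyContinuous_tilted hfQ))
    (integrable_llr_tilted_right hPQ hfP hint hfQ)
  rw [integral_llr_tilted_right hPQ hfP hfQ hint] at h
  simp only [probReal_univ] at h
  linarith

/-- If `P ≤ N Q`, then `dP/dQ ≤ N` almost everywhere, so `(dP/dQ) log (dP/dQ)` is bounded and the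
divergence of `P` from `Q` is a genuine integral rather than a junk value. -/
theorem integrable_llr_of_le {α : Type*} [MeasurableSpace α] (P Q : Measure α)
    [IsProbabilityMeasure P] [IsProbabilityMeasure Q] (hPQ : P ≪ Q) (N : ENNReal) (hN : N ≠ ⊤)
    (hle : ∀ A, MeasurableSet A → P A ≤ N * Q A) : Integrable (llr P Q) P := by
  rw [← integrable_rnDeriv_mul_log_iff hPQ]
  have hbd : P.rnDeriv Q ≤ᵐ[Q] fun _ => N := by
    refine ae_le_of_forall_setLIntegral_le_of_sigmaFinite (P.measurable_rnDeriv Q) fun s hs _ => ?_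
    rw [setLIntegral_const]
    exact (Measure.setLIntegral_rnDeriv_le s).trans (hle s hs)
  obtain ⟨C, hC⟩ := (isCompact_Icc (a := (0 : ℝ)) (b := N.toReal)).exists_bound_of_continuousOn
    (f := fun x => x * log x) continuous_mul_log.continuousOn
  refine .of_bound (C := C) ?_ ?_
  · have := (P.measurable_rnDeriv Q).ennreal_toReal
    exact (this.mul this.log).aestronglyMeasurable
  · filter_upwards [hbd] with x hx
    exact hC _ ⟨ENNReal.toReal_nonneg, ENNReal.toReal_mono hN hx⟩

/-- As `Z` is uniform on a finite set, the joint law is dominated by `n!` times the product of the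
marginals. -/
theorem map_prodMk_le_card_mul_prod {Ω E : Type*} [MeasurableSpace Ω] [MeasurableSpace E] {n : ℕ} (μ : Measure Ω)
    [IsProbabilityMeasure μ] (W : Ω → E) (Z : Ω → Equiv.Perm (Fin n)) (hW : Measurable W)
    (hZ : Measurable Z) (hZu : Measure.map Z μ = uniformPerm n) (A : Set (E × Equiv.Perm (Fin n)))
    (hA : MeasurableSet A) :
    Measure.map (fun ω => (W ω, Z ω)) μ A ≤ (Fintype.card (Equiv.Perm (Fin n)) : ENNReal) *
      ((Measure.map W μ).prod (Measure.map Z μ)) A := by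
  have := Measure.isProbabilityMeasure_map (μ := μ) hW.aemeasurable
  rw [hZu, Measure.prod_apply_symm hA, lintegral_fintype, Finset.mul_sum,
    Measure.map_apply (hW.prodMk hZ) hA]
  have hs : ∀ z : Equiv.Perm (Fin n), MeasurableSet ((fun x : E => (x, z)) ⁻¹' A) :=
    fun z => measurable_prodMk_right hA
  calc μ ((fun ω => (W ω, Z ω)) ⁻¹' A)
      ≤ μ (⋃ z ∈ (Finset.univ : Finset (Equiv.Perm (Fin n))),
          W ⁻¹' ((fun x : E => (x, z)) ⁻¹' A)) := by
        refine measure_mono fun ω hω => ?_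
        simp only [Set.mem_iUnion]
        exact ⟨Z ω, Finset.mem_univ _, hω⟩
    _ ≤ ∑ z : Equiv.Perm (Fin n), μ (W ⁻¹' ((fun x : E => (x, z)) ⁻¹' A)) :=
        measure_biUnion_finset_le _ _
    _ ≤ _ := by
        refine Finset.sum_le_sum fun z _ => le_of_eq ?_
        rw [Measure.map_apply hW (hs z), uniformPerm_singleton, mul_comm, mul_assoc,
          ENNReal.inv_mul_cancel (by simp) (by simp), mul_one]

/-- The information-theoretic bound for the averaged differences over `p` disjoint pairs of
positions. -/
theorem pair_bound {Ω E : Type*} [MeasurableSpace Ω] [MeasurableSpace E] {n p : ℕ} (hp : 0 < p)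
    (μ : Measure Ω) [IsProbabilityMeasure μ] (W : Ω → E) (Z : Ω → Equiv.Perm (Fin n))
    (hW : Measurable W) (hZ : Measurable Z) (hZu : Measure.map Z μ = uniformPerm n)
    (hac : Measure.map (fun ω => (W ω, Z ω)) μ ≪ (Measure.map W μ).prod (Measure.map Z μ))
    (G : E → Fin n → ℝ) (hG : ∀ i, Measurable fun w => G w i) (K : ℝ) (hK : 0 < K)
    (hGK : ∀ w i, |G w i| ≤ K)
    (a b : Fin p → Fin n) (ha : Function.Injective a) (hb : Function.Injective b)
    (hab : ∀ i j, a i ≠ b j) :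
    |∫ ω, (∑ i, (G (W ω) (Z ω (a i)) - G (W ω) (Z ω (b i)))) / p ∂μ|
      ≤ √(8 * K ^ 2 * mutInfo μ W Z / p) := by
  have hp' : (0 : ℝ) < p := by exact_mod_cast hp
  have := Measure.isProbabilityMeasure_map (μ := μ) hW.aemeasurable
  have := Measure.isProbabilityMeasure_map (μ := μ) hZ.aemeasurable
  have := Measure.isProbabilityMeasure_map (μ := μ) (hW.prodMk hZ).aemeasurable
  have hint := integrable_llr_of_le _ _ hac _ (ENNReal.natCast_ne_top _)
    (map_prodMk_le_card_mul_prod μ W Z hW hZ hZu)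
  set F : E × Equiv.Perm (Fin n) → ℝ :=
    fun q => (∑ i, (G q.1 (q.2 (a i)) - G q.1 (q.2 (b i)))) / p with hF
  have hFm : Measurable F := by
    refine measurable_from_prod_countable_left fun z => ?_
    exact (Finset.measurable_sum _ fun i _ =>
      (hG (z (a i))).fun_sub (hG (z (b i)))).div_const _
  have hFb : ∀ q, |F q| ≤ 2 * K := by
    intro q
    rw [hF]
    simp only [abs_div, Nat.abs_cast]
    rw [div_le_iff₀ hp']
    refine (Finset.abs_sum_le_sum_abs _ _).trans ?_
    refine (Finset.sum_le_card_nsmul _ _ (2 * K) fun i _ => ?_).trans (le_of_eq ?_)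
    · have := abs_sub (G q.1 (q.2 (a i))) (G q.1 (q.2 (b i)))
      linarith [hGK q.1 (q.2 (a i)), hGK q.1 (q.2 (b i))]
    · simp [mul_comm]
  have hmap : ∫ ω, (∑ i, (G (W ω) (Z ω (a i)) - G (W ω) (Z ω (b i)))) / p ∂μ
      = ∫ q, F q ∂(Measure.map (fun ω => (W ω, Z ω)) μ) := by
    rw [integral_map (hW.prodMk hZ).aemeasurable hFm.aestronglyMeasurable]
  rw [hmap]
  set A := ∫ q, F q ∂(Measure.map (fun ω => (W ω, Z ω)) μ) with hA
  have key : ∀ t : ℝ, t * A ≤ mutInfo μ W Z + 2 * t ^ 2 * K ^ 2 / p := by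
    intro t
    have hb' : ∀ q, |t * F q| ≤ |t| * (2 * K) := fun q => by
      rw [abs_mul]; exact mul_le_mul_of_nonneg_left (hFb q) (abs_nonneg t)
    have h1 := integral_le_integral_llr_add_log _ _ hac hint (fun q => t * F q) (hFm.const_mul t) _ hb'
    rw [integral_const_mul] at h1
    have hexpint : Integrable (fun q => exp (t * F q))
        ((Measure.map W μ).prod (Measure.map Z μ)) :=
      .of_bound (hFm.const_mul t).exp.aestronglyMeasurable (exp (|t| * (2 * K)))
        (.of_forall fun q => by
          rw [norm_of_nonneg (exp_pos _).le]
          exact exp_le_exp.2 ((le_abs_self _).trans (hb' q)))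
    have h2 : ∫ q, exp (t * F q) ∂((Measure.map W μ).prod (Measure.map Z μ))
        ≤ exp (2 * t ^ 2 * K ^ 2 / p) := by
      rw [integral_prod _ hexpint]
      calc _ ≤ ∫ _, exp (2 * t ^ 2 * K ^ 2 / p) ∂(Measure.map W μ) := by
            refine integral_mono hexpint.integral_prod_left (integrable_const _) fun w => ?_
            simp only [hZu]
            exact integral_exp_le hp t K (G w) (hGK w) a b ha hb hab
        _ = _ := by simp
    have h3 : log (∫ q, exp (t * F q) ∂((Measure.map W μ).prod (Measure.map Z μ)))
        ≤ 2 * t ^ 2 * K ^ 2 / p := by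
      rw [← log_exp (2 * t ^ 2 * K ^ 2 / p)]
      exact log_le_log (integral_exp_pos hexpint) h2
    exact h1.trans (by unfold mutInfo klDivR; linarith)
  refine abs_le_sqrt ?_
  -- The optimal tilt is `t = A / σ²` with variance proxy `σ² = 4 K² / p`.
  have h := key (A * p / (4 * K ^ 2))
  have e1 : A * p / (4 * K ^ 2) * A = A ^ 2 * (p / (4 * K ^ 2)) := by ring
  have e2 : 2 * (A * p / (4 * K ^ 2)) ^ 2 * K ^ 2 / p = A ^ 2 * (p / (4 * K ^ 2)) / 2 := by
    field_simp; ring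
  have e3 : 8 * K ^ 2 * mutInfo μ W Z / p = 2 * mutInfo μ W Z / (p / (4 * K ^ 2)) := by
    field_simp; ring
  rw [e1, e2] at h
  rw [e3, le_div_iff₀ (by positivity)]
  linarith

theorem mutInfo_nonneg {Ω E : Type*} [MeasurableSpace Ω] [MeasurableSpace E] {n : ℕ}
    (μ : Measure Ω) [IsProbabilityMeasure μ] (W : Ω → E) (Z : Ω → Equiv.Perm (Fin n))
    (hW : Measurable W) (hZ : Measurable Z)
    (hac : Measure.map (fun ω => (W ω, Z ω)) μ ≪ (Measure.map W μ).prod (Measure.map Z μ)) :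
    0 ≤ mutInfo μ W Z := by
  have := Measure.isProbabilityMeasure_map (μ := μ) hW.aemeasurable
  have := Measure.isProbabilityMeasure_map (μ := μ) hZ.aemeasurable
  have := Measure.isProbabilityMeasure_map (μ := μ) (hW.prodMk hZ).aemeasurable
  unfold mutInfo klDivR
  rw [← InformationTheory.toReal_klDiv_of_measure_eq hac (by simp)]
  exact ENNReal.toReal_nonneg

theorem one_le_Cmu {m u : ℕ} (hm : 1 ≤ m) (hu : 1 ≤ u) : 1 ≤ Cmu m u := by
  have hm' : (1 : ℝ) ≤ m := by exact_mod_cast hm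
  have hu' : (1 : ℝ) ≤ u := by exact_mod_cast hu
  have hM : (1 : ℝ) ≤ max (m : ℝ) u := le_max_of_le_left hm'
  unfold Cmu
  rw [le_div_iff₀ (mul_pos (by linarith) (by linarith))]
  nlinarith

/-- The difference of the means of a long list and a short list, as an average over the cyclic shifts
of the long list of means of paired differences. -/
theorem cyclic_average {p q : ℕ} [NeZero q] (hp : 0 < p) (hpq : p ≤ q) (x : Fin q → ℝ)
    (y : Fin p → ℝ) :
    (∑ j, x j) / q - (∑ i, y i) / p
      = (∑ k : Fin q, (∑ i : Fin p, (x (Fin.castLE hpq i + k) - y i)) / p) / q := by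
  have hp' : (p : ℝ) ≠ 0 := by exact_mod_cast hp.ne'
  have hq' : (q : ℝ) ≠ 0 := by exact_mod_cast NeZero.ne q
  rw [← Finset.sum_div, Finset.sum_comm]
  have h : ∀ i : Fin p, ∑ k : Fin q, (x (Fin.castLE hpq i + k) - y i) = ∑ j, x j - q * y i := by
    intro i
    have := Equiv.sum_comp (Equiv.addLeft (Fin.castLE hpq i)) x
    simp only [Equiv.coe_addLeft] at this
    rw [Finset.sum_sub_distrib, this]
    simp
  simp_rw [h]
  rw [Finset.sum_sub_distrib, ← Finset.mul_sum]
  simp only [Finset.sum_const, Finset.card_univ, Fintype.card_fin, nsmul_eq_mul]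
  field_simp

/-- The bound of `pair_bound` passes to the difference of the means over two disjoint blocks of
positions; the block `b` is the smaller one, and its size governs the bound. -/
theorem gap_bound {Ω E : Type*} [MeasurableSpace Ω] [MeasurableSpace E] {n p q : ℕ}
    [NeZero q] (hp : 0 < p) (hpq : p ≤ q)
    (μ : Measure Ω) [IsProbabilityMeasure μ] (W : Ω → E) (Z : Ω → Equiv.Perm (Fin n))
    (hW : Measurable W) (hZ : Measurable Z) (hZu : Measure.map Z μ = uniformPerm n)
    (hac : Measure.map (fun ω => (W ω, Z ω)) μ ≪ (Measure.map W μ).prod (Measure.map Z μ))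
    (G : E → Fin n → ℝ) (hG : ∀ i, Measurable fun w => G w i) (K : ℝ) (hK : 0 < K)
    (hGK : ∀ w i, |G w i| ≤ K)
    (a : Fin q → Fin n) (b : Fin p → Fin n) (ha : Function.Injective a)
    (hb : Function.Injective b) (hab : ∀ i j, a i ≠ b j) :
    |∫ ω, ((∑ j, G (W ω) (Z ω (a j))) / q - (∑ i, G (W ω) (Z ω (b i))) / p) ∂μ|
      ≤ √(8 * K ^ 2 * mutInfo μ W Z / p) := by
  have hq' : (0 : ℝ) < q := by exact_mod_cast Nat.pos_of_ne_zero (NeZero.ne q)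
  have hGm : ∀ i, Measurable fun ω => G (W ω) (Z ω i) := fun i => by
    have : Measurable fun r : E × Equiv.Perm (Fin n) => G r.1 (r.2 i) :=
      measurable_from_prod_countable_left fun z => hG (z i)
    exact this.comp (hW.prodMk hZ)
  have hGi : ∀ i, Integrable (fun ω => G (W ω) (Z ω i)) μ := fun i =>
    .of_bound (hGm i).aestronglyMeasurable K (.of_forall fun ω => hGK _ _)
  simp_rw [fun ω => cyclic_average hp hpq (fun j => G (W ω) (Z ω (a j)))
    (fun i => G (W ω) (Z ω (b i)))]
  have hti : ∀ k : Fin q, Integrable (fun ω => (∑ i : Fin p,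
      (G (W ω) (Z ω (a (Fin.castLE hpq i + k))) - G (W ω) (Z ω (b i)))) / p) μ := fun k =>
    (integrable_finsetSum _ fun i _ => (hGi (a (Fin.castLE hpq i + k))).sub (hGi (b i))).div_const _
  rw [integral_div, integral_finsetSum _ fun k _ => hti k, abs_div, Nat.abs_cast,
    div_le_iff₀ hq']
  refine (Finset.abs_sum_le_sum_abs _ _).trans ?_
  refine (Finset.sum_le_card_nsmul _ _ (√(8 * K ^ 2 * mutInfo μ W Z / p)) fun k _ => ?_).trans
    (le_of_eq ?_)
  · exact pair_bound hp μ W Z hW hZ hZu hac G hG K hK hGK (fun i => a (Fin.castLE hpq i + k)) b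
      (ha.comp ((add_left_injective k).comp (Fin.castLE_injective hpq))) hb fun i j => hab _ _
  · simp [mul_comm]

theorem statement18 {Ω S : Type*} [MeasurableSpace Ω] [MeasurableSpace S]
    (m u d : ℕ) (hm : 1 ≤ m) (hu : 1 ≤ u) (hd : 1 ≤ d)
    (s : Fin (m + u) → S) (BH : ℝ) (hBH : 0 < BH)
    (ℓ : EuclideanSpace ℝ (Fin d) → S → ℝ)
    (hℓmeas : Measurable fun p : EuclideanSpace ℝ (Fin d) × S => ℓ p.1 p.2)
    (hℓC2 : ∀ i : Fin (m + u), ContDiff ℝ 2 (fun w => ℓ w (s i)))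
    (hHess : ∀ (w : EuclideanSpace ℝ (Fin d)) (i : Fin (m + u)),
      ‖iteratedFDeriv ℝ 2 (fun w' => ℓ w' (s i)) w‖ ≤ BH)
    (μ : Measure Ω) [IsProbabilityMeasure μ]
    (W : Ω → EuclideanSpace ℝ (Fin d)) (Z : Ω → Equiv.Perm (Fin (m + u)))
    (hW : Measurable W) (hZ : Measurable Z)
    (hZunif : Measure.map Z μ = uniformPerm (m + u))
    (hac : Measure.map (fun ω => (W ω, Z ω)) μ ≪ (Measure.map W μ).prod (Measure.map Z μ)) :
    |∫ ω, traceHessGap m u d s ℓ (W ω) (Z ω) ∂μ|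
      ≤ Real.sqrt (32 * (d : ℝ) ^ 2 * BH ^ 2 * Cmu m u *
          (mutInfo μ W Z + Real.log d) * ((m : ℝ) + u) / (m * u)) := by
  have hm' : (0 : ℝ) < m := by exact_mod_cast hm
  have hu' : (0 : ℝ) < u := by exact_mod_cast hu
  have hd' : (1 : ℝ) ≤ d := by exact_mod_cast hd
  set G : EuclideanSpace ℝ (Fin d) → Fin (m + u) → ℝ := fun w i =>
    ∑ j : Fin d, hessApply d (fun w' => ℓ w' (s i)) w
      (EuclideanSpace.single j 1) (EuclideanSpace.single j 1) with hG
  have hGm : ∀ i, Measurable fun w => G w i := fun i => by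
    refine Finset.measurable_sum _ fun j _ => Continuous.measurable ?_
    have hc := (hℓC2 i).continuous_iteratedFDeriv (m := 2) le_rfl
    exact (ContinuousMultilinearMap.apply ℝ (fun _ : Fin 2 => EuclideanSpace ℝ (Fin d)) ℝ
      ![EuclideanSpace.single j 1, EuclideanSpace.single j 1]).continuous.comp hc
  have hGK : ∀ w i, |G w i| ≤ d * BH := fun w i => by
    refine (Finset.abs_sum_le_sum_abs _ _).trans ?_
    refine (Finset.sum_le_card_nsmul _ _ BH fun j _ => ?_).trans (le_of_eq ?_)
    · have h := (iteratedFDeriv ℝ 2 (fun w' => ℓ w' (s i)) w).le_opNorm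
        ![EuclideanSpace.single j 1, EuclideanSpace.single j 1]
      rw [Fin.prod_univ_two] at h
      simp only [Matrix.cons_val_zero, Matrix.cons_val_one, PiLp.norm_single,
        norm_one, mul_one] at h
      exact h.trans (hHess w i)
    · simp
  have hgap : ∀ ω, traceHessGap m u d s ℓ (W ω) (Z ω)
      = (∑ j : Fin u, G (W ω) (Z ω (Fin.natAdd m j))) / u
        - (∑ i : Fin m, G (W ω) (Z ω (Fin.castAdd u i))) / m := fun ω => by
    unfold traceHessGap
    rw [Finset.sum_sub_distrib, ← Finset.sum_div, ← Finset.sum_div]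
    simp only [Fin.sum_univ_add, Fin.val_castAdd, Fin.val_natAdd, Fin.is_lt, not_le.2 (Fin.is_lt _),
      Nat.le_add_right, not_lt.2 (Nat.le_add_right _ _), if_true, if_false,
      Finset.sum_const_zero, zero_add, add_zero, hG]
    rw [Finset.sum_comm (s := Finset.univ (α := Fin d)) (t := Finset.univ (α := Fin u)),
      Finset.sum_comm (s := Finset.univ (α := Fin d)) (t := Finset.univ (α := Fin m))]
  have hne : ∀ (j : Fin u) (i : Fin m), Fin.natAdd m j ≠ Fin.castAdd u i := fun j i h => by
    have := congrArg Fin.val h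
    simp only [Fin.val_castAdd, Fin.val_natAdd] at this
    omega
  have hI := mutInfo_nonneg μ W Z hW hZ hac
  have hlog : 0 ≤ log d := log_nonneg hd'
  have hC := one_le_Cmu hm hu
  have hK : 0 < d * BH := by positivity
  -- Here `r` is `1 / min m u`, which is at most `1 / m + 1 / u`.
  have final : ∀ r : ℝ, 0 ≤ r → r ≤ ((m : ℝ) + u) / (m * u) →
      √(8 * (d * BH) ^ 2 * mutInfo μ W Z * r) ≤
      Real.sqrt (32 * (d : ℝ) ^ 2 * BH ^ 2 * Cmu m u *
          (mutInfo μ W Z + Real.log d) * ((m : ℝ) + u) / (m * u)) := by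
    intro r hr0 hr
    refine sqrt_le_sqrt ?_
    rw [mul_div_assoc]
    refine mul_le_mul ?_ hr hr0 (by positivity)
    refine mul_le_mul ?_ (by linarith) hI (by positivity)
    rw [mul_pow, ← mul_assoc]
    have h1 : 0 ≤ (d : ℝ) ^ 2 * BH ^ 2 := by positivity
    nlinarith [mul_le_mul_of_nonneg_left hC h1]
  simp_rw [hgap]
  have hsplit : ((m : ℝ) + u) / (m * u) = (m : ℝ)⁻¹ + (u : ℝ)⁻¹ := by field_simp; ring
  rcases le_total m u with h | h
  · have : NeZero u := ⟨by omega⟩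
    refine (gap_bound hm h μ W Z hW hZ hZunif hac G hGm _ hK hGK (Fin.natAdd m) (Fin.castAdd u)
      (Fin.natAdd_injective u m) (Fin.castAdd_injective m u) hne).trans ?_
    rw [div_eq_mul_inv _ (m : ℝ)]
    exact final _ (by positivity) (by rw [hsplit]; linarith [inv_pos.2 hu'])
  · have : NeZero m := ⟨by omega⟩
    rw [← abs_neg, ← integral_neg]
    simp_rw [neg_sub]
    refine (gap_bound hu h μ W Z hW hZ hZunif hac G hGm _ hK hGK (Fin.castAdd u) (Fin.natAdd m)
      (Fin.castAdd_injective m u) (Fin.natAdd_injective u m) fun i j => (hne j i).symm).trans ?_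
    rw [div_eq_mul_inv _ (u : ℝ)]
    exact final _ (by positivity) (by rw [hsplit]; linarith [inv_pos.2 hm'])

end
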